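/- Let d ∈ {1, 2} and let α ≥ 0 be real, with α ≤ 1 when d = 1 and α < 1 when d = 2. Then there exists a constant C > 0 such that for every sequence (λ_j)_{j ∈ ℕ} of nonnegative reals with ∑_j λ_j ≤ 1 and every sequence of measurable functions ψ_j : (ℝ^d)³ → ℂ, the following inequality of Lebesgue integrals in [0, ∞] holds: ∫_{ℝ^d × ℝ^d} ⟨p⟩^{2α} ⟨p′⟩^{2α} ( ∑_j λ_j ∫_{(ℝ^d)^4} |ψ_j(p − q + κ − r + s, q, r)| · |ψ_j(p′, κ, s)| dq dκ dr ds )² dp dp′ ≤ C ( ∑_j λ_j ∫_{(ℝ^d)³} ⟨p⟩² ⟨q⟩² ⟨r⟩² |ψ_j(p, q, r)|² dp dq dr )². -/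

import Mathlib

open MeasureTheory

/-- The Japanese bracket `⟨x⟩ = (1 + ‖x‖²)^{1/2}` on `ℝ^d`. -/
noncomputable def jap {d : ℕ} (x : EuclideanSpace ℝ (Fin d)) : ℝ :=
  (1 + ‖x‖ ^ 2) ^ ((1 : ℝ) / 2)

/-!
By Cauchy–Schwarz with the weight `(⟨p⟩⟨q⟩⟨r⟩)^{2s}`, the square of a rank-one contraction is at
most the contraction of the two energy densities, whose integral over `(p, p')` is the product of
the energies, times the contraction of the weight `(⟨p⟩⟨q⟩⟨r⟩)^{-2s}` with itself. The latter is
`⟨p'⟩^{-2s}` times a fourfold iterated convolution of `⟨·⟩^{-2s}` evaluated at `p`. Since the larger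
of `⟨x⟩`, `⟨y⟩` controls `⟨x + y⟩`, each convolution can be traded for a loss of `ε` in the decay
exponent and a factor `∫ ⟨z⟩^{-(2s+ε)} dz`. Four losses with `4ε = 2s - 2α` leave `⟨p⟩^{-2α}`, and
the integral is finite when `2s + ε > d`. Superpositions follow by expanding the square of the sum
and applying Cauchy–Schwarz to the cross terms.
-/

open scoped ENNReal NNReal

section JapaneseBracket

variable {E : Type*} [SeminormedAddCommGroup E]

/-- The Japanese bracket `⟨x⟩` on an arbitrary (semi)normed group, valued in `ℝ≥0∞` so that its
real powers can be integrated without integrability side conditions; on `ℝ^d` it is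
`ENNReal.ofReal (jap x)`. -/
noncomputable def ejap (x : E) : ℝ≥0∞ :=
  ENNReal.ofReal ((1 + ‖x‖ ^ 2) ^ ((1 : ℝ) / 2))

lemma ejap_eq_ofReal_sqrt (x : E) : ejap x = ENNReal.ofReal √(1 + ‖x‖ ^ 2) := by
  rw [ejap, Real.sqrt_eq_rpow]

lemma ejap_ne_top (x : E) : ejap x ≠ ∞ := ENNReal.ofReal_ne_top

lemma one_le_ejap (x : E) : 1 ≤ ejap x := by
  rw [ejap_eq_ofReal_sqrt, ENNReal.one_le_ofReal, Real.one_le_sqrt]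
  linarith [sq_nonneg ‖x‖]

lemma ejap_ne_zero (x : E) : ejap x ≠ 0 := (one_pos.trans_le (one_le_ejap x)).ne'

lemma ejap_neg (x : E) : ejap (-x) = ejap x := by
  simp only [ejap, norm_neg]

lemma ejap_add_le (x y : E) : ejap (x + y) ≤ ejap x + ejap y := by
  simp only [ejap_eq_ofReal_sqrt]
  rw [← ENNReal.ofReal_add (by positivity) (by positivity)]
  apply ENNReal.ofReal_le_ofReal
  have norm_le_sqrt (z : E) : ‖z‖ ≤ √(1 + ‖z‖ ^ 2) := Real.le_sqrt_of_sq_le (by linarith)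
  have cross_term : ‖x‖ * ‖y‖ ≤ √(1 + ‖x‖ ^ 2) * √(1 + ‖y‖ ^ 2) := by
    gcongr <;> exact norm_le_sqrt _
  have triangle : ‖x + y‖ ^ 2 ≤ (‖x‖ + ‖y‖) ^ 2 := by
    gcongr
    exact norm_add_le x y
  refine Real.sqrt_le_iff.2 ⟨by positivity, ?_⟩
  rw [add_sq, Real.sq_sqrt (by positivity), Real.sq_sqrt (by positivity)]
  linarith [add_sq ‖x‖ ‖y‖]

lemma ejap_rpow_add (a b : ℝ) (x : E) : ejap x ^ (a + b) = ejap x ^ a * ejap x ^ b :=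
  ENNReal.rpow_add _ _ (ejap_ne_zero x) (ejap_ne_top x)

lemma ejap_rpow_mul_rpow_neg (a : ℝ) (x : E) : ejap x ^ a * ejap x ^ (-a) = 1 := by
  rw [← ejap_rpow_add, add_neg_cancel, ENNReal.rpow_zero]

lemma ejap_rpow_ne_top (a : ℝ) (x : E) : ejap x ^ a ≠ ∞ :=
  ENNReal.rpow_ne_top_of_ne_zero (ejap_ne_zero x) (ejap_ne_top x)

@[fun_prop]
lemma measurable_ejap [MeasurableSpace E] [OpensMeasurableSpace E] :
    Measurable (ejap : E → ℝ≥0∞) := by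
  unfold ejap
  fun_prop

lemma ejap_rpow_neg_le_of_le {c : ℝ} (hc : 0 ≤ c) {x y : E} (hxy : ejap x ≤ ejap y) :
    ejap y ^ (-c) ≤ 2 ^ c * ejap (x + y) ^ (-c) := by
  have hsum : ejap (x + y) ≤ 2 * ejap y :=
    (ejap_add_le x y).trans (by rw [two_mul]; gcongr)
  calc ejap y ^ (-c) = ejap (x + y) ^ c * ejap (x + y) ^ (-c) * ejap y ^ (-c) := by
        rw [ejap_rpow_mul_rpow_neg, one_mul]
    _ ≤ (2 * ejap y) ^ c * ejap (x + y) ^ (-c) * ejap y ^ (-c) := by gcongr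
    _ = 2 ^ c * ejap (x + y) ^ (-c) * (ejap y ^ c * ejap y ^ (-c)) := by
        rw [ENNReal.mul_rpow_of_nonneg _ _ hc]; ring
    _ = 2 ^ c * ejap (x + y) ^ (-c) := by rw [ejap_rpow_mul_rpow_neg, mul_one]

lemma ejap_rpow_neg_mul_le_of_le {a b c : ℝ} (hc : 0 ≤ c) (hcb : c ≤ b) {x y : E}
    (hxy : ejap x ≤ ejap y) :
    ejap x ^ (-a) * ejap y ^ (-b) ≤ 2 ^ c * ejap x ^ (-(a + b - c)) * ejap (x + y) ^ (-c) := by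
  have hdecay : ejap y ^ (-(b - c)) ≤ ejap x ^ (-(b - c)) := by
    rw [ENNReal.rpow_neg, ENNReal.rpow_neg]
    gcongr
  calc ejap x ^ (-a) * ejap y ^ (-b)
      = ejap x ^ (-a) * ejap y ^ (-(b - c)) * ejap y ^ (-c) := by
        rw [mul_assoc, ← ejap_rpow_add]; ring_nf
    _ ≤ ejap x ^ (-a) * ejap x ^ (-(b - c)) * (2 ^ c * ejap (x + y) ^ (-c)) := by
        gcongr
        exact ejap_rpow_neg_le_of_le hc hxy
    _ = 2 ^ c * ejap x ^ (-(a + b - c)) * ejap (x + y) ^ (-c) := by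
        rw [← ejap_rpow_add, mul_left_comm, ← mul_assoc]; ring_nf

lemma ejap_rpow_neg_mul_le {a b c : ℝ} (hc : 0 ≤ c) (hca : c ≤ a) (hcb : c ≤ b) (x y : E) :
    ejap x ^ (-a) * ejap y ^ (-b) ≤
      2 ^ c * (ejap x ^ (-(a + b - c)) + ejap y ^ (-(a + b - c))) * ejap (x + y) ^ (-c) := by
  rcases le_total (ejap x) (ejap y) with hxy | hyx
  · refine (ejap_rpow_neg_mul_le_of_le hc hcb hxy).trans ?_
    gcongr
    exact le_self_add
  · rw [mul_comm, add_comm a b, add_comm x y]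
    refine (ejap_rpow_neg_mul_le_of_le hc hca hyx).trans ?_
    gcongr
    exact le_add_self

variable [MeasurableSpace E] [BorelSpace E] {μ : Measure E}
  [μ.IsAddLeftInvariant] [μ.IsNegInvariant]

lemma lconvolution_ejap_rpow_neg_le {a b c : ℝ} (hc : 0 ≤ c) (hca : c ≤ a) (hcb : c ≤ b)
    (y : E) :
    ((ejap · ^ (-a)) ⋆ₗ[μ] (ejap · ^ (-b))) y ≤
      2 ^ (c + 1) * (∫⁻ z, ejap z ^ (-(a + b - c)) ∂μ) * ejap y ^ (-c) := by
  have hreflect : ∫⁻ z, ejap (-z + y) ^ (-(a + b - c)) ∂μ = ∫⁻ z, ejap z ^ (-(a + b - c)) ∂μ := by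
    simpa only [neg_add_eq_sub] using
      lintegral_sub_left_eq_self (μ := μ) (ejap · ^ (-(a + b - c))) y
  calc ((ejap · ^ (-a)) ⋆ₗ[μ] (ejap · ^ (-b))) y
      ≤ ∫⁻ z, 2 ^ c * (ejap z ^ (-(a + b - c)) + ejap (-z + y) ^ (-(a + b - c))) *
          ejap y ^ (-c) ∂μ := by
        refine lintegral_mono fun z ↦ ?_
        simpa only [add_neg_cancel_left] using ejap_rpow_neg_mul_le hc hca hcb z (-z + y)
    _ = 2 ^ (c + 1) * (∫⁻ z, ejap z ^ (-(a + b - c)) ∂μ) * ejap y ^ (-c) := by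
        rw [lintegral_mul_const _ (by fun_prop), lintegral_const_mul _ (by fun_prop),
          lintegral_add_left (by fun_prop), hreflect, ← two_mul, ← mul_assoc,
          ENNReal.rpow_add _ _ two_ne_zero ENNReal.ofNat_ne_top, ENNReal.rpow_one]

lemma lconvolution_ejap_rpow_neg_iterate_le {t ε : ℝ} (hε : 0 ≤ ε) (n : ℕ) (hn : n * ε ≤ t)
    (y : E) :
    ((lconvolution (ejap · ^ (-t)) · μ)^[n] (ejap · ^ (-t))) y ≤
      (2 ^ (t + 1) * ∫⁻ z, ejap z ^ (-(t + ε)) ∂μ) ^ n * ejap y ^ (-(t - n * ε)) := by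
  induction n generalizing y with
  | zero => simp
  | succ n ih =>
    push_cast at hn ⊢
    have hnε : 0 ≤ n * ε := by positivity
    let K := 2 ^ (t + 1) * ∫⁻ z, ejap z ^ (-(t + ε)) ∂μ
    have hstep : ((ejap · ^ (-t)) ⋆ₗ[μ] (ejap · ^ (-(t - n * ε)))) y ≤
        K * ejap y ^ (-(t - (n + 1) * ε)) := by
      refine (lconvolution_ejap_rpow_neg_le (c := t - (n + 1) * ε) (by linarith) (by linarith)
        (by linarith) y).trans ?_
      unfold K
      rw [show t + (t - n * ε) - (t - (n + 1) * ε) = t + ε by ring]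
      have hconst : (2 : ℝ≥0∞) ^ (t - (n + 1) * ε + 1) ≤ 2 ^ (t + 1) :=
        ENNReal.rpow_le_rpow_of_exponent_le one_le_two (by linarith)
      gcongr
    rw [Function.iterate_succ_apply', pow_succ, mul_assoc]
    calc _ ≤ ∫⁻ z, K ^ n * (ejap z ^ (-t) * ejap (-z + y) ^ (-(t - n * ε))) ∂μ := by
          refine lintegral_mono fun z ↦ ?_
          rw [mul_left_comm]
          gcongr
          exact ih (by linarith) _
      _ = K ^ n * ((ejap · ^ (-t)) ⋆ₗ[μ] (ejap · ^ (-(t - n * ε)))) y :=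
          lintegral_const_mul _ (by fun_prop)
      _ ≤ K ^ n * (K * ejap y ^ (-(t - (n + 1) * ε))) := by gcongr

end JapaneseBracket

lemma lintegral_ejap_rpow_neg_lt_top {E : Type*} [NormedAddCommGroup E] [NormedSpace ℝ E]
    [FiniteDimensional ℝ E] [MeasurableSpace E] [BorelSpace E] (μ : Measure E)
    [μ.IsAddHaarMeasure] {r : ℝ} (hr : Module.finrank ℝ E < r) :
    ∫⁻ x, ejap x ^ (-r) ∂μ < ∞ := by
  convert (integrable_rpow_neg_one_add_norm_sq (μ := μ) hr).lintegral_lt_top using 3 with x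
  rw [ejap, ENNReal.ofReal_rpow_of_pos (by positivity), ← Real.rpow_mul (by positivity)]
  ring_nf

section LIntegral

lemma sq_lintegral_le_of_sq_le_mul {X : Type*} [MeasurableSpace X] {μ : Measure X}
    {f u v : X → ℝ≥0∞} (hu : AEMeasurable u μ) (hv : AEMeasurable v μ)
    (h : ∀ x, f x ^ 2 ≤ u x * v x) :
    (∫⁻ x, f x ∂μ) ^ 2 ≤ (∫⁻ x, u x ∂μ) * ∫⁻ x, v x ∂μ := by
  have hf (x : X) : f x ≤ u x ^ (1 / 2 : ℝ) * v x ^ (1 / 2 : ℝ) := by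
    rw [← ENNReal.mul_rpow_of_nonneg _ _ (by positivity), one_div]
    exact (ENNReal.le_rpow_inv_iff two_pos).2 (by simpa using h x)
  have hint : ∫⁻ x, f x ∂μ ≤ (∫⁻ x, u x ∂μ) ^ (1 / 2 : ℝ) * (∫⁻ x, v x ∂μ) ^ (1 / 2 : ℝ) :=
    (lintegral_mono hf).trans <| ENNReal.lintegral_mul_norm_pow_le hu hv (by norm_num)
      (by norm_num) (by norm_num)
  rw [← ENNReal.mul_rpow_of_nonneg _ _ (by positivity), one_div,
    ENNReal.le_rpow_inv_iff two_pos] at hint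
  simpa using hint

lemma lintegral_sq_tsum_le {ι X : Type*} [Countable ι] [MeasurableSpace X] {μ : Measure X}
    {b : ι → X → ℝ≥0∞} {N : ι → ℝ≥0∞} {C : ℝ≥0∞} (hb : ∀ j, Measurable (b j))
    (h : ∀ j, ∫⁻ x, b j x ^ 2 ∂μ ≤ C * N j ^ 2) (l : ι → ℝ≥0∞) :
    ∫⁻ x, (∑' j, l j * b j x) ^ 2 ∂μ ≤ C * (∑' j, l j * N j) ^ 2 := by
  have hjk (j k : ι) : ∫⁻ x, b j x * b k x ∂μ ≤ C * (N j * N k) := by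
    rw [← ENNReal.pow_le_pow_left_iff two_ne_zero]
    calc (∫⁻ x, b j x * b k x ∂μ) ^ 2
        ≤ (∫⁻ x, b j x ^ 2 ∂μ) * ∫⁻ x, b k x ^ 2 ∂μ :=
          sq_lintegral_le_of_sq_le_mul (by fun_prop) (by fun_prop) fun x ↦ (mul_pow ..).le
      _ ≤ (C * N j ^ 2) * (C * N k ^ 2) := mul_le_mul' (h j) (h k)
      _ = (C * (N j * N k)) ^ 2 := by ring
  have sq_tsum (u : ι → ℝ≥0∞) : (∑' j, u j) ^ 2 = ∑' j, ∑' k, u j * u k := by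
    simp_rw [ENNReal.tsum_mul_left, ENNReal.tsum_mul_right, sq]
  calc ∫⁻ x, (∑' j, l j * b j x) ^ 2 ∂μ
      = ∑' j, ∑' k, ∫⁻ x, (l j * l k) * (b j x * b k x) ∂μ := by
        simp_rw [sq_tsum, mul_mul_mul_comm]
        rw [lintegral_tsum fun j ↦ by fun_prop]
        exact tsum_congr fun j ↦ lintegral_tsum fun k ↦ by fun_prop
    _ = ∑' j, ∑' k, (l j * l k) * ∫⁻ x, b j x * b k x ∂μ :=
        tsum_congr fun j ↦ tsum_congr fun k ↦ lintegral_const_mul _ (by fun_prop)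
    _ ≤ ∑' j, ∑' k, (l j * l k) * (C * (N j * N k)) := by
        gcongr
        exact hjk _ _
    _ = C * (∑' j, l j * N j) ^ 2 := by
        simp_rw [sq_tsum, ← ENNReal.tsum_mul_left, mul_left_comm C, mul_mul_mul_comm]

lemma lintegral_prod_prod_mul_comm {X₁ X₂ Y₁ Y₂ : Type*} [MeasurableSpace X₁] [MeasurableSpace X₂]
    [MeasurableSpace Y₁] [MeasurableSpace Y₂] {μ₁ : Measure X₁} {μ₂ : Measure X₂}
    {ν₁ : Measure Y₁} {ν₂ : Measure Y₂} [SFinite μ₂] [SFinite ν₁] [SFinite ν₂]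
    {f : X₁ × Y₁ → ℝ≥0∞} {g : X₂ × Y₂ → ℝ≥0∞} (hf : Measurable f) (hg : Measurable g) :
    ∫⁻ w, f (w.1.1, w.2.1) * g (w.1.2, w.2.2) ∂(μ₁.prod μ₂).prod (ν₁.prod ν₂) =
      (∫⁻ x, f x ∂μ₁.prod ν₁) * ∫⁻ x, g x ∂μ₂.prod ν₂ := by
  calc _ = ∫⁻ v, (∫⁻ y, f (v.1, y) ∂ν₁) * ∫⁻ y, g (v.2, y) ∂ν₂ ∂μ₁.prod μ₂ := by
        rw [lintegral_prod _ (by fun_prop)]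
        refine lintegral_congr fun v ↦ ?_
        exact lintegral_prod_mul (f := fun y ↦ f (v.1, y)) (g := fun y ↦ g (v.2, y))
          (by fun_prop) (by fun_prop)
    _ = _ := by
        rw [lintegral_prod_mul hf.lintegral_prod_right'.aemeasurable
          hg.lintegral_prod_right'.aemeasurable, lintegral_prod _ hf.aemeasurable,
          lintegral_prod _ hg.aemeasurable]

end LIntegral

section Contraction

variable {E : Type*} [SeminormedAddCommGroup E]

/-- `⟨p⟩⟨q⟩⟨r⟩`, the Fourier symbol of `∏ᵢ (1 - Δᵢ)^{1/2}` on three-particle wave functions. -/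
noncomputable def tripleJap (x : E × E × E) : ℝ≥0∞ :=
  ejap x.1 * ejap x.2.1 * ejap x.2.2

lemma tripleJap_ne_zero (x : E × E × E) : tripleJap x ≠ 0 :=
  mul_ne_zero (mul_ne_zero (ejap_ne_zero _) (ejap_ne_zero _)) (ejap_ne_zero _)

lemma tripleJap_ne_top (x : E × E × E) : tripleJap x ≠ ∞ :=
  ENNReal.mul_ne_top (ENNReal.mul_ne_top (ejap_ne_top _) (ejap_ne_top _)) (ejap_ne_top _)

lemma tripleJap_rpow (x : E × E × E) (a : ℝ) :
    tripleJap x ^ a = ejap x.1 ^ a * ejap x.2.1 ^ a * ejap x.2.2 ^ a := by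
  rw [tripleJap,
    ENNReal.mul_rpow_of_ne_top (ENNReal.mul_ne_top (ejap_ne_top _) (ejap_ne_top _)) (ejap_ne_top _),
    ENNReal.mul_rpow_of_ne_top (ejap_ne_top _) (ejap_ne_top _)]

lemma tripleJap_rpow_neg_mul_rpow (x : E × E × E) (a : ℝ) :
    tripleJap x ^ (-a) * tripleJap x ^ a = 1 := by
  rw [← ENNReal.rpow_add _ _ (tripleJap_ne_zero x) (tripleJap_ne_top x), neg_add_cancel,
    ENNReal.rpow_zero]

lemma lintegral_ejap_rpow_mul {X : Type*} [MeasurableSpace X] (ν : Measure X) (a : ℝ) (z : E)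
    (f : X → ℝ≥0∞) : ∫⁻ x, ejap z ^ a * f x ∂ν = ejap z ^ a * ∫⁻ x, f x ∂ν :=
  lintegral_const_mul' _ _ (ejap_rpow_ne_top a z)

variable [MeasurableSpace E]

/-- The Fourier-space integral kernel, at `(p, p')`, of the three-body contraction `B⁺_{1;2,3}`
applied to the operator with kernel `f(p, q, r) g(p', q', r')`. The integration variable is
`w = ((q, κ), (r, s))`. -/
noncomputable def contraction (μ : Measure E) (f g : E × E × E → ℝ≥0∞) (pp : E × E) : ℝ≥0∞ :=
  ∫⁻ w : (E × E) × E × E, f (pp.1 - w.1.1 + w.1.2 - w.2.1 + w.2.2, w.1.1, w.2.1) *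
    g (pp.2, w.1.2, w.2.2) ∂(μ.prod μ).prod (μ.prod μ)

/-- The kinetic energy `∫ ⟨p⟩^{2s}⟨q⟩^{2s}⟨r⟩^{2s} f(p, q, r)²` of a wave function whose Fourier
transform has modulus `f`; for `s = 1` it is `Tr (1−Δ₁)(1−Δ₂)(1−Δ₃) |ψ⟩⟨ψ|`. -/
noncomputable def kineticEnergy (μ : Measure E) (s : ℝ) (f : E × E × E → ℝ≥0∞) : ℝ≥0∞ :=
  ∫⁻ x, tripleJap x ^ (2 * s) * f x ^ 2 ∂μ.prod (μ.prod μ)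

variable {μ : Measure E}

lemma lintegral_ejap_rpow_mul_sub (a : ℝ) (f : E → ℝ≥0∞) (y : E) :
    ∫⁻ z, ejap z ^ a * f (y - z) ∂μ = ((ejap · ^ a) ⋆ₗ[μ] f) y := by
  simp only [lconvolution_def, neg_add_eq_sub]

variable [BorelSpace E]

@[fun_prop]
lemma measurable_tripleJap : Measurable (tripleJap : E × E × E → ℝ≥0∞) := by
  unfold tripleJap
  fun_prop

lemma lintegral_ejap_rpow_mul_add [μ.IsNegInvariant] (a : ℝ) (f : E → ℝ≥0∞) (y : E) :
    ∫⁻ z, ejap z ^ a * f (y + z) ∂μ = ((ejap · ^ a) ⋆ₗ[μ] f) y := by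
  rw [← lintegral_neg_eq_self]
  simp only [ejap_neg, ← sub_eq_add_neg, lintegral_ejap_rpow_mul_sub]

variable [SecondCountableTopology E] {f g : E × E × E → ℝ≥0∞}

lemma sq_contraction_le (hf : Measurable f) (hg : Measurable g) (s : ℝ) (pp : E × E) :
    contraction μ f g pp ^ 2 ≤
      contraction μ (tripleJap · ^ (-(2 * s))) (tripleJap · ^ (-(2 * s))) pp *
        contraction μ (fun x ↦ tripleJap x ^ (2 * s) * f x ^ 2)
          (fun x ↦ tripleJap x ^ (2 * s) * g x ^ 2) pp := by
  refine sq_lintegral_le_of_sq_le_mul (by fun_prop) (by fun_prop) fun w ↦ ?_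
  rw [mul_mul_mul_comm, ← mul_assoc (_ ^ _), ← mul_assoc (_ ^ _), tripleJap_rpow_neg_mul_rpow,
    tripleJap_rpow_neg_mul_rpow, one_mul, one_mul, mul_pow]

variable [SFinite μ]

lemma measurable_contraction (hf : Measurable f) (hg : Measurable g) :
    Measurable (contraction μ f g) :=
  Measurable.lintegral_prod_right (by fun_prop)

lemma lintegral_contraction [μ.IsAddRightInvariant] (hf : Measurable f) (hg : Measurable g) :
    ∫⁻ pp, contraction μ f g pp ∂μ.prod μ =
      (∫⁻ x, f x ∂μ.prod (μ.prod μ)) * ∫⁻ x, g x ∂μ.prod (μ.prod μ) := by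
  have translate (w : (E × E) × E × E) :
      ∫⁻ p, f (p - w.1.1 + w.1.2 - w.2.1 + w.2.2, w.1.1, w.2.1) ∂μ =
        ∫⁻ p, f (p, w.1.1, w.2.1) ∂μ := by
    rw [← lintegral_add_right_eq_self (fun p ↦ f (p, w.1.1, w.2.1))
      (-w.1.1 + w.1.2 - w.2.1 + w.2.2)]
    refine lintegral_congr fun p ↦ ?_
    congr 2
    abel
  calc ∫⁻ pp, contraction μ f g pp ∂μ.prod μ
      = ∫⁻ w, (∫⁻ p, f (p, w.1.1, w.2.1) ∂μ) * (∫⁻ p', g (p', w.1.2, w.2.2) ∂μ)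
          ∂(μ.prod μ).prod (μ.prod μ) := by
        unfold contraction
        rw [lintegral_lintegral_swap (by fun_prop)]
        refine lintegral_congr fun w ↦ ?_
        rw [← translate]
        exact lintegral_prod_mul
          (f := fun p ↦ f (p - w.1.1 + w.1.2 - w.2.1 + w.2.2, w.1.1, w.2.1))
          (g := fun p' ↦ g (p', w.1.2, w.2.2)) (by fun_prop) (by fun_prop)
    _ = (∫⁻ y, ∫⁻ p, f (p, y) ∂μ ∂μ.prod μ) * ∫⁻ y, ∫⁻ p', g (p', y) ∂μ ∂μ.prod μ :=
        lintegral_prod_prod_mul_comm hf.lintegral_prod_left' hg.lintegral_prod_left'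
    _ = _ := by rw [← lintegral_prod_symm' _ hf, ← lintegral_prod_symm' _ hg]

lemma contraction_tripleJap_rpow [μ.IsNegInvariant] (a : ℝ) (pp : E × E) :
    contraction μ (tripleJap · ^ a) (tripleJap · ^ a) pp =
      ((lconvolution (ejap · ^ a) · μ)^[4] (ejap · ^ a)) pp.1 * ejap pp.2 ^ a := by
  obtain ⟨p, p'⟩ := pp
  have fubini (y : E) :
      ∫⁻ v : E × E, ejap v.1 ^ a * (ejap v.2 ^ a * ejap (y - v.1 + v.2) ^ a) ∂μ.prod μ =
        ∫⁻ r, ejap r ^ a * ∫⁻ s, ejap s ^ a * ejap (y - r + s) ^ a ∂μ ∂μ := by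
    rw [lintegral_prod _ (by fun_prop)]
    simp only [lintegral_ejap_rpow_mul]
  calc _ = ∫⁻ w : (E × E) × E × E, ejap p' ^ a * (ejap w.1.1 ^ a * (ejap w.1.2 ^ a *
          (ejap w.2.1 ^ a * (ejap w.2.2 ^ a * ejap (p - w.1.1 + w.1.2 - w.2.1 + w.2.2) ^ a))))
          ∂(μ.prod μ).prod (μ.prod μ) := by
        refine lintegral_congr fun w ↦ ?_
        simp only [tripleJap_rpow]
        ring
    _ = ejap p' ^ a * ∫⁻ q, ejap q ^ a * ∫⁻ κ, ejap κ ^ a * ∫⁻ r, ejap r ^ a *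
          ∫⁻ s, ejap s ^ a * ejap (p - q + κ - r + s) ^ a ∂μ ∂μ ∂μ ∂μ := by
        rw [lintegral_ejap_rpow_mul, lintegral_prod _ (by fun_prop), lintegral_prod _ (by fun_prop)]
        simp only [lintegral_ejap_rpow_mul, fubini]
    _ = _ := by
        simp only [lintegral_ejap_rpow_mul_add a (ejap · ^ a)]
        simp only [lintegral_ejap_rpow_mul_sub, lintegral_ejap_rpow_mul_add]
        exact mul_comm _ _

end Contraction

section APrioriBound

/-- The constant of the a priori bound: each of the four convolutions contributes one factor
`2^(2s+1) ∫ ⟨z⟩^{-(2s+ε)}` with `ε = (s - α) / 2`. -/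
noncomputable def contractionConst {E : Type*} [SeminormedAddCommGroup E] [MeasurableSpace E]
    (μ : Measure E) (s α : ℝ) : ℝ≥0∞ :=
  (2 ^ (2 * s + 1) * ∫⁻ z, ejap z ^ (-(2 * s + (s - α) / 2)) ∂μ) ^ 4

variable {E : Type*} [SeminormedAddCommGroup E] [MeasurableSpace E] [BorelSpace E]
  [SecondCountableTopology E] {μ : Measure E} [SFinite μ] [μ.IsAddLeftInvariant]
  [μ.IsNegInvariant] {f g : E × E × E → ℝ≥0∞} {s α : ℝ}

lemma contraction_tripleJap_rpow_neg_le (hα : 0 ≤ α) (hαs : α ≤ s) (pp : E × E) :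
    contraction μ (tripleJap · ^ (-(2 * s))) (tripleJap · ^ (-(2 * s))) pp ≤
      contractionConst μ s α * (ejap pp.1 ^ (-(2 * α)) * ejap pp.2 ^ (-(2 * α))) := by
  rw [contraction_tripleJap_rpow, ← mul_assoc, contractionConst]
  gcongr
  · have h := lconvolution_ejap_rpow_neg_iterate_le (μ := μ) (t := 2 * s) (ε := (s - α) / 2)
      (by linarith) 4 (by push_cast; linarith) pp.1
    rwa [show 2 * s - ((4 : ℕ) : ℝ) * ((s - α) / 2) = 2 * α by push_cast; ring] at h
  · exact one_le_ejap _

lemma lintegral_ejap_mul_sq_contraction_le (hf : Measurable f) (hg : Measurable g) (hα : 0 ≤ α)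
    (hαs : α ≤ s) :
    ∫⁻ pp, ejap pp.1 ^ (2 * α) * ejap pp.2 ^ (2 * α) * contraction μ f g pp ^ 2 ∂μ.prod μ ≤
      contractionConst μ s α * (kineticEnergy μ s f * kineticEnergy μ s g) := by
  set K := contractionConst μ s α
  set F : E × E × E → ℝ≥0∞ := fun x ↦ tripleJap x ^ (2 * s) * f x ^ 2
  set G : E × E × E → ℝ≥0∞ := fun x ↦ tripleJap x ^ (2 * s) * g x ^ 2
  have hF : Measurable F := by fun_prop
  have hG : Measurable G := by fun_prop
  have pointwise (pp : E × E) :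
      ejap pp.1 ^ (2 * α) * ejap pp.2 ^ (2 * α) * contraction μ f g pp ^ 2 ≤
        K * contraction μ F G pp := by
    calc _ ≤ ejap pp.1 ^ (2 * α) * ejap pp.2 ^ (2 * α) *
            (K * (ejap pp.1 ^ (-(2 * α)) * ejap pp.2 ^ (-(2 * α))) * contraction μ F G pp) := by
          gcongr
          refine (sq_contraction_le hf hg s pp).trans ?_
          gcongr
          exact contraction_tripleJap_rpow_neg_le hα hαs pp
      _ = (ejap pp.1 ^ (2 * α) * ejap pp.1 ^ (-(2 * α))) *
            (ejap pp.2 ^ (2 * α) * ejap pp.2 ^ (-(2 * α))) * (K * contraction μ F G pp) := by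
          ring
      _ = K * contraction μ F G pp := by
          rw [ejap_rpow_mul_rpow_neg, ejap_rpow_mul_rpow_neg, one_mul, one_mul]
  calc _ ≤ ∫⁻ pp, K * contraction μ F G pp ∂μ.prod μ := lintegral_mono pointwise
    _ = K * (kineticEnergy μ s f * kineticEnergy μ s g) := by
        rw [lintegral_const_mul _ (measurable_contraction hF hG), lintegral_contraction hF hG,
          kineticEnergy, kineticEnergy]

theorem lintegral_ejap_mul_sq_tsum_contraction_le {ι : Type*} [Countable ι]
    {f : ι → E × E × E → ℝ≥0∞} (hf : ∀ j, Measurable (f j)) (hα : 0 ≤ α) (hαs : α ≤ s)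
    (l : ι → ℝ≥0∞) :
    ∫⁻ pp, ejap pp.1 ^ (2 * α) * ejap pp.2 ^ (2 * α) *
        (∑' j, l j * contraction μ (f j) (f j) pp) ^ 2 ∂μ.prod μ ≤
      contractionConst μ s α * (∑' j, l j * kineticEnergy μ s (f j)) ^ 2 := by
  have hm (j : ι) : Measurable (contraction μ (f j) (f j)) := measurable_contraction (hf j) (hf j)
  have hweight : Measurable fun pp : E × E ↦ ejap pp.1 ^ (2 * α) * ejap pp.2 ^ (2 * α) := by
    fun_prop
  set ν := (μ.prod μ).withDensity fun pp ↦ ejap pp.1 ^ (2 * α) * ejap pp.2 ^ (2 * α)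
  have weighted {h : E × E → ℝ≥0∞} (hh : Measurable h) : ∫⁻ pp, h pp ∂ν =
      ∫⁻ pp, ejap pp.1 ^ (2 * α) * ejap pp.2 ^ (2 * α) * h pp ∂μ.prod μ :=
    lintegral_withDensity_eq_lintegral_mul _ hweight hh
  rw [← weighted (by fun_prop)]
  refine lintegral_sq_tsum_le hm (fun j ↦ ?_) l
  rw [weighted (by fun_prop), sq (kineticEnergy μ s (f j))]
  exact lintegral_ejap_mul_sq_contraction_le (hf j) (hf j) hα hαs

end APrioriBound

lemma contractionConst_ne_top {E : Type*} [NormedAddCommGroup E] [NormedSpace ℝ E]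
    [FiniteDimensional ℝ E] [MeasurableSpace E] [BorelSpace E] (μ : Measure E)
    [μ.IsAddHaarMeasure] {s α : ℝ} (hdim : Module.finrank ℝ E < 2 * s + (s - α) / 2) :
    contractionConst μ s α ≠ ∞ :=
  ENNReal.pow_ne_top <| ENNReal.mul_ne_top (by finiteness)
    (lintegral_ejap_rpow_neg_lt_top μ hdim).ne

theorem statement5_general {E : Type*} [NormedAddCommGroup E] [NormedSpace ℝ E]
    [FiniteDimensional ℝ E] [MeasurableSpace E] [BorelSpace E] (μ : Measure E)
    [μ.IsAddHaarMeasure] {s α : ℝ} (hα : 0 ≤ α) (hαs : α ≤ s)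
    (hdim : Module.finrank ℝ E < 2 * s + (s - α) / 2) :
    ∃ C : ℝ≥0, 0 < C ∧ ∀ {ι : Type*} [Countable ι] (l : ι → ℝ≥0∞) (f : ι → E × E × E → ℝ≥0∞),
      (∀ j, Measurable (f j)) →
      ∫⁻ pp, ejap pp.1 ^ (2 * α) * ejap pp.2 ^ (2 * α) *
          (∑' j, l j * contraction μ (f j) (f j) pp) ^ 2 ∂μ.prod μ ≤
        C * (∑' j, l j * kineticEnergy μ s (f j)) ^ 2 := by
  refine ⟨(contractionConst μ s α).toNNReal + 1, by positivity, fun l f hf ↦ ?_⟩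
  refine (lintegral_ejap_mul_sq_tsum_contraction_le hf hα hαs l).trans ?_
  gcongr
  rw [ENNReal.coe_add, ENNReal.coe_toNNReal (contractionConst_ne_top μ hdim)]
  exact le_self_add

section Euclidean

variable {d : ℕ}

lemma jap_pos (x : EuclideanSpace ℝ (Fin d)) : 0 < jap x :=
  Real.rpow_pos_of_pos (by positivity) _

lemma ofReal_jap (x : EuclideanSpace ℝ (Fin d)) : ENNReal.ofReal (jap x) = ejap x := rfl

lemma ofReal_jap_rpow_mul_jap_rpow (a b : ℝ) (x y : EuclideanSpace ℝ (Fin d)) :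
    ENNReal.ofReal (jap x ^ a * jap y ^ b) = ejap x ^ a * ejap y ^ b := by
  have hx := jap_pos x
  have hy := jap_pos y
  rw [ENNReal.ofReal_mul (by positivity), ← ENNReal.ofReal_rpow_of_pos hx,
    ← ENNReal.ofReal_rpow_of_pos hy, ofReal_jap, ofReal_jap]

variable {G : Type*} [SeminormedAddCommGroup G]
  (ψ : EuclideanSpace ℝ (Fin d) × EuclideanSpace ℝ (Fin d) × EuclideanSpace ℝ (Fin d) → G)

lemma contraction_enorm (pp : EuclideanSpace ℝ (Fin d) × EuclideanSpace ℝ (Fin d)) :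
    contraction volume (‖ψ ·‖ₑ) (‖ψ ·‖ₑ) pp =
      ∫⁻ w : (EuclideanSpace ℝ (Fin d) × EuclideanSpace ℝ (Fin d)) ×
          EuclideanSpace ℝ (Fin d) × EuclideanSpace ℝ (Fin d),
        ENNReal.ofReal (‖ψ (pp.1 - w.1.1 + w.1.2 - w.2.1 + w.2.2, w.1.1, w.2.1)‖ *
          ‖ψ (pp.2, w.1.2, w.2.2)‖) := by
  simp only [ENNReal.ofReal_mul (norm_nonneg _), ofReal_norm]
  rfl

lemma kineticEnergy_one_enorm :
    kineticEnergy volume 1 (‖ψ ·‖ₑ) =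
      ∫⁻ x : EuclideanSpace ℝ (Fin d) × EuclideanSpace ℝ (Fin d) × EuclideanSpace ℝ (Fin d),
        ENNReal.ofReal (jap x.1 ^ 2 * jap x.2.1 ^ 2 * jap x.2.2 ^ 2 * ‖ψ x‖ ^ 2) := by
  refine lintegral_congr fun x ↦ ?_
  have hnonneg (y : EuclideanSpace ℝ (Fin d)) : 0 ≤ jap y := (jap_pos y).le
  rw [← mul_pow, ← mul_pow, ← mul_pow, ENNReal.ofReal_pow
      (by have := hnonneg x.1; have := hnonneg x.2.1; have := hnonneg x.2.2; positivity),
    ENNReal.ofReal_mul' (norm_nonneg _), ENNReal.ofReal_mul' (hnonneg _),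
    ENNReal.ofReal_mul' (hnonneg _), ofReal_norm, mul_one, ENNReal.rpow_two, ← mul_pow]
  rfl

end Euclidean

/-- Fourier-space form of the a priori bound
`‖S^{(1,α)} B⁺_{1;2,3} γ^{(3)}‖_{L²} ≤ C · Tr (1−Δ₁)(1−Δ₂)(1−Δ₃) γ^{(3)}`
for a positive trace-class `γ^{(3)} = ∑_j λ_j |ψ_j⟩⟨ψ_j|` with `λ_j ≥ 0`, `∑ λ_j ≤ 1`,
in dimension `d ∈ {1,2}` with `α ≤ 1` (`d = 1`) resp. `α < 1` (`d = 2`). -/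
theorem statement5 (d : ℕ) (hd : d = 1 ∨ d = 2) (α : ℝ) (hα : 0 ≤ α)
    (h1 : d = 1 → α ≤ 1) (h2 : d = 2 → α < 1) :
    ∃ C : ℝ, 0 < C ∧
      ∀ (lam : ℕ → ℝ)
        (ψ : ℕ → EuclideanSpace ℝ (Fin d) × EuclideanSpace ℝ (Fin d) ×
          EuclideanSpace ℝ (Fin d) → ℂ),
        (∀ j, 0 ≤ lam j) → (∑' j, ENNReal.ofReal (lam j)) ≤ 1 → (∀ j, Measurable (ψ j)) →
        (∫⁻ pp : EuclideanSpace ℝ (Fin d) × EuclideanSpace ℝ (Fin d),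
            ENNReal.ofReal (jap pp.1 ^ (2 * α) * jap pp.2 ^ (2 * α)) *
            (∑' j : ℕ, ENNReal.ofReal (lam j) *
              ∫⁻ w : (EuclideanSpace ℝ (Fin d) × EuclideanSpace ℝ (Fin d)) ×
                      EuclideanSpace ℝ (Fin d) × EuclideanSpace ℝ (Fin d),
                ENNReal.ofReal
                  (‖ψ j (pp.1 - w.1.1 + w.1.2 - w.2.1 + w.2.2, w.1.1, w.2.1)‖ *
                    ‖ψ j (pp.2, w.1.2, w.2.2)‖)) ^ 2)
          ≤ ENNReal.ofReal C *
            (∑' j : ℕ, ENNReal.ofReal (lam j) *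
              ∫⁻ x : EuclideanSpace ℝ (Fin d) × EuclideanSpace ℝ (Fin d) ×
                      EuclideanSpace ℝ (Fin d),
                ENNReal.ofReal
                  (jap x.1 ^ 2 * jap x.2.1 ^ 2 * jap x.2.2 ^ 2 * ‖ψ j x‖ ^ 2)) ^ 2 := by
  obtain ⟨hα1, hdim⟩ : α ≤ 1 ∧ (d : ℝ) < 2 * 1 + (1 - α) / 2 := by
    rcases hd with rfl | rfl <;> grind
  obtain ⟨C, hC, h⟩ := statement5_general (volume : Measure (EuclideanSpace ℝ (Fin d))) hα hα1
    (by simpa using hdim)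
  refine ⟨C, hC, fun lam ψ _ _ hψ ↦ ?_⟩
  simpa only [ofReal_jap_rpow_mul_jap_rpow, contraction_enorm, kineticEnergy_one_enorm,
    ENNReal.ofReal_coe_nnreal, ← Measure.volume_eq_prod] using
    h (fun j ↦ .ofReal (lam j)) (‖ψ · ·‖ₑ) fun j ↦ (hψ j).enorm
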